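/- Let p be a prime and let H be a nontrivial abelian finite group acting faithfully on a faithful irreducible module V of order p^a over the field of p elements, and let k be a subfield of the complex numbers containing the primitive pth roots of unity. Set G = V ⋊ H. Then acd_k(G) ≥ 2, except in the following cases: (1) if |H| = 2, then acd_k(G) = 2(p^a + 1)/(p^a + 3); (2) if |H| = 3, A^k(H) = 1, and p^a < 10, then acd_k(G) = 3(p^a + 2)/(p^a + 8); (3) if |H| = p^a − 1 and A^k(H) = 1, then acd_k(G) = 2(p^a − 1)/p^a. -/

import Mathlib

open scoped BigOperators

/-- The set of irreducible complex characters of `G`, viewed as functions `G → ℂ`. -/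
def Irr (G : Type) [Monoid G] : Set (G → ℂ) :=
  {f | ∃ V : FDRep ℂ G, CategoryTheory.Simple V ∧ f = V.character}

/-- The degree of a character, i.e. its value at the identity (a natural number). -/
noncomputable def charDeg {G : Type} [One G] (f : G → ℂ) : ℕ := ⌊(f 1).re⌋₊

/-- The average of the degrees of the characters in a set `S` of characters. -/
noncomputable def acd {G : Type} [One G] (S : Set (G → ℂ)) : ℝ :=
  (∑ᶠ f ∈ S, (f 1).re) / (S.ncard : ℝ)

/-- `G` has a normal `p`-complement: a normal subgroup of order coprime to `p`
whose index is a power of `p`. -/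
def HasNormalPComplement (p : ℕ) (G : Type) [Group G] : Prop :=
  ∃ N : Subgroup G, N.Normal ∧ Nat.Coprime (Nat.card N) p ∧ ∃ n : ℕ, N.index = p ^ n

/-!
Since every `h ≠ 1` in `H` acts without fixed points, `v ↦ v / h v` is onto `V`, so `H` acts freely
on the nontrivial linear characters of `V`, and each of them induces an irreducible character of
`G = V ⋊ H` of degree `|H|`. Together with the inflations of the linear characters of `H` these are
all the irreducible characters, because they sum to the regular character: inducing the trivial
character of `V` gives the sum of the inflations, and the characters induced from all linear
characters of `V` add up to the regular character.

The induced characters have all their values in `k`. So if `m` linear characters of `H` have values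
in `k` and there are `t` orbits, then `acd_k(G) = (m + t|H|) / (m + t)` and `|V| = t|H| + 1`. As
`m` divides `|H|`, the inequality `m + t|H| < 2(m + t)` leaves only the three exceptions.
-/

section Irreducible

variable {G : Type} [Group G]

lemma sum_mul_inv_eq_zero_of_mem_Irr [Fintype G] {f f' : G → ℂ} (hf : f ∈ Irr G) (hf' : f' ∈ Irr G)
    (hne : f ≠ f') : ∑ g, f g * f' g⁻¹ = 0 := by
  obtain ⟨W, hW, rfl⟩ := hf
  obtain ⟨W', hW', rfl⟩ := hf'
  have hcard : (Nat.card G : ℂ) ≠ 0 := NeZero.ne _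
  have := invertibleOfNonzero hcard
  have hiso : ¬ Nonempty (W ≅ W') := fun ⟨i⟩ => hne (FDRep.char_iso i)
  simpa [hcard, hiso] using FDRep.char_orthonormal W W'

lemma apply_one_ne_zero_of_mem_Irr [Finite G] {f : G → ℂ} (hf : f ∈ Irr G) : f 1 ≠ 0 := by
  obtain ⟨W, hW, rfl⟩ := hf
  have := Fintype.ofFinite G
  intro hdeg
  have : Subsingleton W := by
    rw [FDRep.char_one, Nat.cast_eq_zero] at hdeg
    exact Module.finrank_zero_iff.1 hdeg
  have hchar (g : G) : W.character g = 0 := by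
    rw [FDRep.character, Subsingleton.elim (W.ρ g) 0, map_zero]
  have hnorm := (FDRep.simple_iff_char_is_norm_one W).1 hW
  simp only [hchar, mul_zero, Finset.sum_const_zero] at hnorm
  exact NeZero.ne (Nat.card G : ℂ) hnorm.symm

lemma character_mem_Irr [Fintype G] {W : Type} [AddCommGroup W] [Module ℂ W]
    [FiniteDimensional ℂ W] (ρ : Representation ℂ G W)
    (hnorm : ∑ g, ρ.character g * ρ.character g⁻¹ = Nat.card G) : ρ.character ∈ Irr G :=
  ⟨FDRep.of ρ, (FDRep.simple_iff_char_is_norm_one _).2 hnorm, rfl⟩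

lemma Irr_eq_range_of_sum_eq_regular [Finite G] [DecidableEq G] {ι : Type*} [Fintype ι]
    {χ : ι → G → ℂ} (hχ : ∀ i, χ i ∈ Irr G)
    (hreg : ∑ i, χ i = Pi.single 1 (Nat.card G : ℂ)) : Irr G = Set.range χ := by
  have := Fintype.ofFinite G
  refine Set.Subset.antisymm (fun f hf => ?_) (Set.range_subset_iff.2 hχ)
  by_contra hf'
  have hne (i : ι) : f ≠ χ i := fun h => hf' ⟨i, h.symm⟩
  have horth : f 1 * Nat.card G = 0 :=
    calc f 1 * Nat.card G = ∑ g, f g * (∑ i, χ i) g⁻¹ := by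
          rw [hreg]
          simp [Pi.single_apply, -Nat.card_eq_fintype_card]
      _ = ∑ i, ∑ g, f g * χ i g⁻¹ := by
          simp only [Finset.sum_apply, Finset.mul_sum]
          exact Finset.sum_comm
      _ = 0 := Finset.sum_eq_zero fun i _ => sum_mul_inv_eq_zero_of_mem_Irr hf (hχ i) (hne i)
  exact mul_ne_zero (apply_one_ne_zero_of_mem_Irr hf) (NeZero.ne _) horth

/-- The linear character of `G` given by `ψ`, with values in `ℂ` instead of `ℂˣ`. -/
def linearChar (ψ : G →* ℂˣ) : G → ℂ := fun g => ψ g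

lemma linearChar_injective : Function.Injective (linearChar : (G →* ℂˣ) → G → ℂ) :=
  fun _ _ h => MonoidHom.ext fun g => Units.ext (congrFun h g)

lemma linearChar_mem_Irr [Finite G] (ψ : G →* ℂˣ) : linearChar ψ ∈ Irr G := by
  have := Fintype.ofFinite G
  let ρ : Representation ℂ G ℂ :=
    (Algebra.lmul ℂ ℂ : ℂ →* Module.End ℂ ℂ).comp ((Units.coeHom ℂ).comp ψ)
  have hρ : ρ.character = linearChar ψ := by
    funext g
    exact (Algebra.trace_apply ℂ (ψ g : ℂ)).symm.trans (Algebra.trace_self_apply _)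
  rw [← hρ]
  refine character_mem_Irr ρ ?_
  simp [hρ, linearChar]

lemma sum_linearChar_mul_inv [Fintype G] [DecidableEq (G →* ℂˣ)] (l m : G →* ℂˣ) :
    ∑ g, linearChar l g * linearChar m g⁻¹ = if l = m then (Nat.card G : ℂ) else 0 := by
  classical
  have h := sum_hom_units ((Units.coeHom ℂ).comp (l / m))
  have hiff : (Units.coeHom ℂ).comp (l / m) = 1 ↔ l = m := by
    rw [← div_eq_one (a := l)]
    exact ⟨fun h => MonoidHom.ext fun g => Units.ext (DFunLike.congr_fun h g), fun h => by simp [h]⟩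
  simpa [linearChar, hiff, div_eq_mul_inv] using h

end Irreducible

section Dual

variable {A : Type} [CommGroup A] [Finite A]

lemma sum_linearChar [DecidableEq A] [Fintype (A →* ℂˣ)] :
    ∑ ψ : A →* ℂˣ, linearChar ψ = Pi.single 1 (Nat.card A : ℂ) := by
  funext a
  rw [Finset.sum_apply, Pi.single_apply]
  have h := sum_hom_units ((Units.coeHom ℂ).comp (MonoidHom.eval a : (A →* ℂˣ) →* ℂˣ))
  have hiff : (Units.coeHom ℂ).comp (MonoidHom.eval a : (A →* ℂˣ) →* ℂˣ) = 1 ↔ a = 1 := by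
    rw [← CommGroup.forall_apply_eq_apply_iff A (M := ℂ)]
    simp only [DFunLike.ext_iff, MonoidHom.comp_apply, MonoidHom.eval_apply_apply, map_one,
      Units.coeHom_apply, MonoidHom.one_apply, Units.val_eq_one]
  rw [← Nat.card_eq_fintype_card, CommGroup.card_monoidHom_of_hasEnoughRootsOfUnity] at h
  simpa [linearChar, hiff] using h

lemma Irr_eq_range_linearChar : Irr A = Set.range (linearChar : (A →* ℂˣ) → A → ℂ) := by
  classical
  have := Fintype.ofFinite (A →* ℂˣ)
  exact Irr_eq_range_of_sum_eq_regular linearChar_mem_Irr sum_linearChar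

end Dual

section ValuesInSubfield

/-- The group of linear characters of `G` whose values lie in `k`. -/
def dualOver (G : Type) [Group G] (k : Subfield ℂ) : Subgroup (G →* ℂˣ) where
  carrier := {ψ | ∀ x, (ψ x : ℂ) ∈ k}
  one_mem' _ := k.one_mem
  mul_mem' hψ hχ x := k.mul_mem (hψ x) (hχ x)
  inv_mem' hψ x := by simpa using k.inv_mem (hψ x)

/-- The intersection of the kernels of the linear characters of `G` with values in `k`,
written `A^k(G)` in the literature. -/
def linearKernel (G : Type) [Group G] (k : Subfield ℂ) : Set G :=
  {g | ∀ χ : G → ℂ, χ ∈ Irr G → χ 1 = 1 → (∀ x, χ x ∈ k) → χ g = 1}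

variable {A : Type} [CommGroup A] [Finite A] {k : Subfield ℂ}

lemma mem_linearKernel_iff {g : A} : g ∈ linearKernel A k ↔ ∀ ψ ∈ dualOver A k, ψ g = 1 := by
  simp only [linearKernel, Irr_eq_range_linearChar, Set.mem_ofPred_eq, Set.forall_mem_range,
    linearChar, map_one, Units.val_one, Units.val_eq_one, forall_const]
  rfl

lemma linearKernel_eq_one_iff : linearKernel A k = {1} ↔ dualOver A k = ⊤ := by
  let e := (CommGroup.subgroupOrderIsoSubgroupMonoidHom A ℂ).symm
  have hker : (e (OrderDual.toDual (dualOver A k)) : Set A) = linearKernel A k := by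
    ext g
    rw [SetLike.mem_coe, CommGroup.mem_subgroupOrderIsoSubgroupMonoidHom_symm_iff,
      mem_linearKernel_iff]
  rw [← hker, ← Subgroup.coe_bot, SetLike.coe_set_eq, map_eq_bot_iff]
  exact Iff.rfl

lemma card_dualOver_dvd : Nat.card (dualOver A k) ∣ Nat.card A := by
  rw [← CommGroup.card_monoidHom_of_hasEnoughRootsOfUnity A ℂ]
  exact Subgroup.card_subgroup_dvd_card _

lemma card_dualOver_eq_iff : Nat.card (dualOver A k) = Nat.card A ↔ linearKernel A k = {1} := by
  rw [← CommGroup.card_monoidHom_of_hasEnoughRootsOfUnity A ℂ, Subgroup.card_eq_iff_eq_top,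
    linearKernel_eq_one_iff]

lemma dualOver_eq_top_of_primitiveRoot_mem {G : Type} [Group G] [Finite G]
    (hk : ∀ ζ : ℂ, IsPrimitiveRoot ζ (Monoid.exponent G) → ζ ∈ k) : dualOver G k = ⊤ := by
  refine eq_top_iff.2 fun ψ _ x => ?_
  have : NeZero (Monoid.exponent G) := ⟨Monoid.exponent_ne_zero_of_finite⟩
  have hζ := Complex.isPrimitiveRoot_exp _ (NeZero.ne (Monoid.exponent G))
  have hpow : (ψ x : ℂ) ^ Monoid.exponent G = 1 := by
    rw [← Units.val_pow_eq_pow_val, ← map_pow, Monoid.pow_exponent_eq_one, map_one, Units.val_one]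
  obtain ⟨i, -, hi⟩ := hζ.eq_pow_of_pow_eq_one hpow
  exact hi ▸ k.pow_mem (hk _ hζ) i

lemma dualOver_eq_top_of_card_eq_two {G : Type} [Group G] (hG : Nat.card G = 2) :
    dualOver G k = ⊤ := by
  have : Finite G := Nat.finite_of_card_ne_zero (hG ▸ two_ne_zero)
  have : IsCyclic G := isCyclic_of_prime_card hG
  refine dualOver_eq_top_of_primitiveRoot_mem fun ζ hζ => ?_
  rw [IsCyclic.exponent_eq_card, hG] at hζ
  exact hζ.eq_neg_one_of_two_right ▸ k.neg_mem k.one_mem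

end ValuesInSubfield

section Semidirect

variable {H V : Type}

section Twist

variable [Group H] [Group V] (φ : H →* MulAut V)

/-- The translate `l ∘ φ x` of a linear character `l` of `V`, as a function of `x : H`; its range
is the orbit of `l` under the action of `H` on the linear characters of `V`. -/
def twist (l : V →* ℂˣ) (x : H) : V →* ℂˣ := l.comp (φ x).toMonoidHom

lemma twist_apply (l : V →* ℂˣ) (x : H) (v : V) : twist φ l x v = l (φ x v) := rfl

lemma twist_one (l : V →* ℂˣ) : twist φ l 1 = l := by
  ext v; simp [twist_apply]

lemma twist_mul (l : V →* ℂˣ) (x y : H) : twist φ l (x * y) = twist φ (twist φ l x) y := by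
  ext v; simp [twist_apply]

lemma one_twist (x : H) : twist φ 1 x = 1 := rfl

variable {φ}

lemma twist_eq_one_iff {l : V →* ℂˣ} {x : H} : twist φ l x = 1 ↔ l = 1 := by
  refine ⟨fun h => ?_, fun h => h ▸ one_twist φ x⟩
  rw [← twist_one φ l, ← mul_inv_cancel x, twist_mul, h, one_twist]

lemma twist_injective [Finite V] (hfree : ∀ h ≠ 1, MonoidHom.FixedPointFree (φ h))
    {l : V →* ℂˣ} (hl : l ≠ 1) : Function.Injective (twist φ l) := by
  intro x y hxy
  by_contra hne
  have hfix (w : V) : l (φ (x * y⁻¹) w) = l w := by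
    rw [← twist_apply, twist_mul, hxy, ← twist_mul, mul_inv_cancel, twist_one]
  refine hl (MonoidHom.ext fun v => ?_)
  obtain ⟨w, rfl⟩ := (hfree _ (mul_inv_eq_one.not.2 hne)).commutatorMap_surjective v
  rw [MonoidHom.commutatorMap_apply, map_div, hfix, div_self', MonoidHom.one_apply]

end Twist

instance [Group H] [Group V] {φ : H →* MulAut V} [Finite H] [Finite V] : Finite (V ⋊[φ] H) :=
  .of_equiv _ SemidirectProduct.equivProd.symm

section Induced

variable [Group H] [Group V] (φ : H →* MulAut V)

/-- The representation of `V ⋊[φ] H` induced by the linear character `l` of `V`, realised on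
functions on the coset representatives `H`. -/
def inducedRep (l : V →* ℂˣ) : Representation ℂ (V ⋊[φ] H) (H → ℂ) where
  toFun g :=
    { toFun F x := (twist φ l x g.left : ℂ) * F (x * g.right)
      map_add' F F' := by ext x; simp [mul_add]
      map_smul' c F := by ext x; simp [mul_left_comm] }
  map_one' := by ext; simp
  map_mul' g h := by
    refine LinearMap.ext fun F => funext fun x => ?_
    simp [twist_apply, mul_assoc]

/-- The character of `V ⋊[φ] H` induced by the linear character `l` of `V`. -/
noncomputable def inducedChar (l : V →* ℂˣ) : V ⋊[φ] H → ℂ := (inducedRep φ l).character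

variable {φ}

lemma inducedChar_apply [Fintype H] [DecidableEq H] (l : V →* ℂˣ) (g : V ⋊[φ] H) :
    inducedChar φ l g = if g.right = 1 then ∑ x, linearChar (twist φ l x) g.left else 0 := by
  rw [inducedChar, Representation.character,
    LinearMap.trace_eq_matrix_trace ℂ (Pi.basisFun ℂ H), Matrix.trace]
  simp [inducedRep, linearChar, Pi.single_apply]

lemma inducedChar_inl [Fintype H] (l : V →* ℂˣ) (v : V) :
    inducedChar φ l (SemidirectProduct.inl v) = ∑ x, linearChar (twist φ l x) v := by
  classical simp [inducedChar_apply]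

lemma inducedChar_of_right_ne_one [Finite H] (l : V →* ℂˣ) {g : V ⋊[φ] H} (hg : g.right ≠ 1) :
    inducedChar φ l g = 0 := by
  classical
  have := Fintype.ofFinite H
  rw [inducedChar_apply, if_neg hg]

lemma inducedChar_one [Finite H] (l : V →* ℂˣ) : inducedChar φ l 1 = Nat.card H := by
  have := Fintype.ofFinite H
  rw [← map_one SemidirectProduct.inl, inducedChar_inl]
  simp [linearChar]

lemma inducedChar_apply_mem [Finite H] {k : Subfield ℂ} {l : V →* ℂˣ} (hl : l ∈ dualOver V k)
    (g : V ⋊[φ] H) : inducedChar φ l g ∈ k := by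
  classical
  have := Fintype.ofFinite H
  rw [inducedChar_apply]
  split_ifs
  · exact k.sum_mem fun x _ => hl _
  · exact k.zero_mem

lemma inducedChar_twist [Finite H] (l : V →* ℂˣ) (x : H) :
    inducedChar φ (twist φ l x) = inducedChar φ l := by
  classical
  have := Fintype.ofFinite H
  funext g
  simp only [inducedChar_apply, ← twist_mul]
  exact if_congr Iff.rfl (Equiv.sum_comp (Equiv.mulLeft x) fun y =>
    linearChar (twist φ l y) g.left) rfl

lemma sum_eq_sum_inl_of_right_ne_one [Fintype V] [Fintype (V ⋊[φ] H)] {M : Type*}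
    [AddCommMonoid M] {F : V ⋊[φ] H → M}
    (hF : ∀ g, g.right ≠ 1 → F g = 0) : ∑ g, F g = ∑ v, F (SemidirectProduct.inl v) := by
  refine (Fintype.sum_of_injective SemidirectProduct.inl SemidirectProduct.inl_injective _ _
    (fun g hg => hF g fun hg1 => hg ?_) fun v => rfl).symm
  exact (SetLike.ext_iff.1 SemidirectProduct.range_inl_eq_ker_rightHom g).2 hg1

lemma sum_inducedChar_inl_mul_inv [Finite H] [Fintype V] (l m : V →* ℂˣ) :
    ∑ v, inducedChar φ l (SemidirectProduct.inl v) * linearChar m v⁻¹ =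
      Nat.card {x // twist φ l x = m} * Nat.card V := by
  classical
  have := Fintype.ofFinite H
  calc ∑ v, inducedChar φ l (SemidirectProduct.inl v) * linearChar m v⁻¹
      = ∑ x, ∑ v, linearChar (twist φ l x) v * linearChar m v⁻¹ := by
        simp only [inducedChar_inl, Finset.sum_mul]
        exact Finset.sum_comm
    _ = Nat.card {x // twist φ l x = m} * Nat.card V := by
        simp [sum_linearChar_mul_inv, Finset.sum_ite, Fintype.card_subtype]

variable [Finite H] [Finite V]

lemma inducedChar_eq_iff {l m : V →* ℂˣ} :
    inducedChar φ l = inducedChar φ m ↔ ∃ x, twist φ l x = m := by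
  refine ⟨fun h => ?_, fun ⟨x, hx⟩ => hx ▸ (inducedChar_twist l x).symm⟩
  have := Fintype.ofFinite H
  have := Fintype.ofFinite V
  have hcard : Nat.card {x // twist φ l x = m} = Nat.card {x // twist φ m x = m} := by
    have := sum_inducedChar_inl_mul_inv (φ := φ) l m
    rw [h, sum_inducedChar_inl_mul_inv] at this
    exact_mod_cast mul_right_cancel₀ (NeZero.ne (Nat.card V : ℂ)) this.symm
  have : Nonempty {x // twist φ m x = m} := ⟨1, twist_one φ m⟩
  obtain ⟨⟨x, hx⟩⟩ := (Nat.card_pos_iff.1 (hcard.symm ▸ Nat.card_pos)).1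
  exact ⟨x, hx⟩

lemma inducedChar_mem_Irr (hfree : ∀ h ≠ 1, MonoidHom.FixedPointFree (φ h))
    {l : V →* ℂˣ} (hl : l ≠ 1) : inducedChar φ l ∈ Irr (V ⋊[φ] H) := by
  have := Fintype.ofFinite H
  have := Fintype.ofFinite V
  have := Fintype.ofFinite (V ⋊[φ] H)
  have hfibre (y : H) : Nat.card {x // twist φ l x = twist φ l y} = 1 := by
    simp [(twist_injective hfree hl).eq_iff]
  refine character_mem_Irr (inducedRep φ l) ?_
  calc ∑ g, inducedChar φ l g * inducedChar φ l g⁻¹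
      = ∑ v : V, inducedChar φ l (.inl v) * inducedChar φ l (.inl v⁻¹) := by
        rw [sum_eq_sum_inl_of_right_ne_one fun g hg => by
          rw [inducedChar_of_right_ne_one l hg, zero_mul]]
        simp only [map_inv]
    _ = ∑ y, ∑ v : V, inducedChar φ l (.inl v) * linearChar (twist φ l y) v⁻¹ := by
        simp only [inducedChar_inl l (_⁻¹), Finset.mul_sum]
        exact Finset.sum_comm
    _ = Nat.card (V ⋊[φ] H) := by
        rw [SemidirectProduct.card, mul_comm]
        simp only [sum_inducedChar_inl_mul_inv, hfibre]
        simp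

end Induced

section Abelian

variable [Group H] [CommGroup V] {φ : H →* MulAut V} [Finite H] [Finite V]

lemma sum_inducedChar [DecidableEq (V ⋊[φ] H)] [Fintype (V →* ℂˣ)] :
    ∑ l, inducedChar φ l = Pi.single 1 (Nat.card (V ⋊[φ] H) : ℂ) := by
  classical
  have := Fintype.ofFinite H
  funext g
  rw [Finset.sum_apply]
  by_cases hg : g.right = 1
  · calc ∑ l, inducedChar φ l g = ∑ x, (∑ l : V →* ℂˣ, linearChar l) (φ x g.left) := by
          simp only [inducedChar_apply, if_pos hg, Finset.sum_apply]
          exact Finset.sum_comm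
      _ = Pi.single (M := fun _ => ℂ) 1 (Nat.card (V ⋊[φ] H) : ℂ) g := by
          rw [SemidirectProduct.card, mul_comm]
          simp only [sum_linearChar, Pi.single_apply]
          simp [SemidirectProduct.ext_iff, hg]
  · simp [inducedChar_of_right_ne_one _ hg, SemidirectProduct.ext_iff, hg]

lemma ncard_inducedChar_image_mul_add_one
    (hfree : ∀ h ≠ 1, MonoidHom.FixedPointFree (φ h)) :
    (inducedChar φ '' {1}ᶜ).ncard * Nat.card H + 1 = Nat.card V := by
  classical
  have := Fintype.ofFinite H
  have := Fintype.ofFinite (V →* ℂˣ)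
  let nontriv : Finset (V →* ℂˣ) := Finset.univ.erase 1
  have himage : inducedChar φ '' {1}ᶜ = nontriv.image (inducedChar φ) := by
    rw [Finset.coe_image, Finset.coe_erase, Finset.coe_univ, Set.compl_eq_univ_sdiff]
  have hfibre : ∀ χ ∈ nontriv.image (inducedChar φ),
      (nontriv.filter (inducedChar φ · = χ)).card = Nat.card H := by
    intro χ hχ
    obtain ⟨l, hl, rfl⟩ := Finset.mem_image.1 hχ
    have hl : l ≠ 1 := Finset.ne_of_mem_erase hl
    have horbit : nontriv.filter (inducedChar φ · = inducedChar φ l) =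
        Finset.univ.image (twist φ l) := by
      ext m
      simp only [nontriv, Finset.mem_filter, Finset.mem_erase, Finset.mem_univ, and_true,
        Finset.mem_image, true_and, eq_comm (b := inducedChar φ l), inducedChar_eq_iff,
        and_iff_right_iff_imp, forall_exists_index]
      rintro x rfl
      exact twist_eq_one_iff.not.2 hl
    rw [horbit, Finset.card_image_of_injective _ (twist_injective hfree hl), Finset.card_univ,
      Nat.card_eq_fintype_card]
  have hcount : nontriv.card = (nontriv.image (inducedChar φ)).card * Nat.card H :=
    (Finset.card_eq_sum_card_image _ _).trans (Finset.sum_const_nat hfibre)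
  rw [himage, Set.ncard_coe_finset, ← hcount, Finset.card_erase_add_one (Finset.mem_univ 1),
    Finset.card_univ, ← Nat.card_eq_fintype_card,
    CommGroup.card_monoidHom_of_hasEnoughRootsOfUnity]

end Abelian

section Inflated

variable [Group H] [Group V] (φ : H →* MulAut V)

/-- The linear character of `V ⋊[φ] H` inflated from the linear character `ψ` of `H`. -/
def inflatedChar (ψ : H →* ℂˣ) : V ⋊[φ] H → ℂ :=
  linearChar (ψ.comp SemidirectProduct.rightHom)

variable {φ}

lemma inflatedChar_apply (ψ : H →* ℂˣ) (g : V ⋊[φ] H) :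
    inflatedChar φ ψ g = linearChar ψ g.right := rfl

lemma inflatedChar_one (ψ : H →* ℂˣ) : inflatedChar φ ψ 1 = 1 := by
  simp [inflatedChar_apply, linearChar]

lemma inflatedChar_injective : Function.Injective (inflatedChar φ) :=
  linearChar_injective.comp fun _ _ =>
    (MonoidHom.cancel_right SemidirectProduct.rightHom_surjective).1

lemma forall_inflatedChar_apply_mem_iff {k : Subfield ℂ} {ψ : H →* ℂˣ} :
    (∀ g, inflatedChar φ ψ g ∈ k) ↔ ψ ∈ dualOver H k :=
  (SemidirectProduct.rightHom_surjective.forall (p := fun x => linearChar ψ x ∈ k)).symm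

end Inflated

lemma sum_inflatedChar [CommGroup H] [Finite H] [Fintype (H →* ℂˣ)] [Group V]
    {φ : H →* MulAut V} : ∑ ψ, inflatedChar φ ψ = inducedChar φ 1 := by
  classical
  have := Fintype.ofFinite H
  funext g
  have h := congrFun (sum_linearChar (A := H)) g.right
  rw [Finset.sum_apply] at h ⊢
  simpa [inducedChar_apply, inflatedChar_apply, linearChar, one_twist, Pi.single_apply] using h

section Classification

variable [CommGroup H] [CommGroup V] {φ : H →* MulAut V} [Finite H] [Finite V]

theorem Irr_semidirectProduct_eq (hfree : ∀ h ≠ 1, MonoidHom.FixedPointFree (φ h)) :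
    Irr (V ⋊[φ] H) = Set.range (inflatedChar φ) ∪ inducedChar φ '' {1}ᶜ := by
  classical
  have := Fintype.ofFinite (H →* ℂˣ)
  have := Fintype.ofFinite (V →* ℂˣ)
  let χ : (H →* ℂˣ) ⊕ {l : V →* ℂˣ // l ≠ 1} → V ⋊[φ] H → ℂ :=
    Sum.elim (inflatedChar φ) fun l => inducedChar φ l
  have hχ : ∀ i, χ i ∈ Irr (V ⋊[φ] H) := by
    rintro (ψ | l)
    · exact linearChar_mem_Irr _
    · exact inducedChar_mem_Irr hfree l.2
  have hreg : ∑ i, χ i = Pi.single 1 (Nat.card (V ⋊[φ] H) : ℂ) := by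
    rw [Fintype.sum_sum_type, ← sum_inducedChar,
      Fintype.sum_eq_add_sum_subtype_ne (inducedChar φ) 1, ← sum_inflatedChar]
    rfl
  rw [Irr_eq_range_of_sum_eq_regular hχ hreg, Set.Sum.elim_range, Set.image_eq_range]
  rfl

lemma Irr_semidirectProduct_values_mem_eq (hfree : ∀ h ≠ 1, MonoidHom.FixedPointFree (φ h))
    {k : Subfield ℂ} (hk : dualOver V k = ⊤) :
    {f ∈ Irr (V ⋊[φ] H) | ∀ g, f g ∈ k} =
      inflatedChar φ '' dualOver H k ∪ inducedChar φ '' {1}ᶜ := by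
  have hinduced : ∀ l ∈ ({1}ᶜ : Set (V →* ℂˣ)), ∀ g, inducedChar φ l g ∈ k := fun l _ =>
    inducedChar_apply_mem (hk ▸ Subgroup.mem_top l)
  rw [Irr_semidirectProduct_eq hfree]
  refine (Set.sep_union (p := fun f : V ⋊[φ] H → ℂ => ∀ g, f g ∈ k)).trans (congrArg₂ _ ?_ ?_)
  · ext f
    constructor
    · rintro ⟨⟨ψ, rfl⟩, hψ⟩
      exact ⟨ψ, forall_inflatedChar_apply_mem_iff.1 hψ, rfl⟩
    · rintro ⟨ψ, hψ, rfl⟩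
      exact ⟨⟨ψ, rfl⟩, forall_inflatedChar_apply_mem_iff.2 hψ⟩
  · exact Set.sep_eq_self_iff_mem_true.2 (Set.forall_mem_image.2 hinduced)

end Classification

end Semidirect

section AverageDegree

variable {G : Type} [One G] {A B : Set (G → ℂ)}

lemma finsum_mem_degree_eq {a : ℝ} (hA : A.Finite) (ha : ∀ f ∈ A, (f 1).re = a) :
    ∑ᶠ f ∈ A, (f 1).re = A.ncard * a := by
  rw [finsum_mem_congr rfl ha, finsum_mem_eq_finite_toFinset_sum _ hA, Finset.sum_const,
    nsmul_eq_mul, Set.ncard_eq_toFinset_card A hA]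

lemma acd_union {a b : ℝ} (hA : A.Finite) (hB : B.Finite) (hAB : Disjoint A B)
    (ha : ∀ f ∈ A, (f 1).re = a) (hb : ∀ f ∈ B, (f 1).re = b) :
    acd (A ∪ B) = (A.ncard * a + B.ncard * b) / (A.ncard + B.ncard) := by
  rw [acd, finsum_mem_union hAB hA hB, finsum_mem_degree_eq hA ha, finsum_mem_degree_eq hB hb,
    Set.ncard_union_eq hAB hA hB, Nat.cast_add]

end AverageDegree

lemma fixedPointFree_of_irreducible {H V : Type*} [CommGroup H] [Group V] {φ : H →* MulAut V}
    (hfaith : Function.Injective φ)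
    (hirr : ∀ W : Subgroup V, (∀ h : H, ∀ w ∈ W, φ h w ∈ W) → W = ⊥ ∨ W = ⊤)
    {h : H} (hh : h ≠ 1) : MonoidHom.FixedPointFree (φ h) := by
  let fixed : Subgroup V := (φ h).toMonoidHom.eqLocus (MonoidHom.id V)
  have hinv : ∀ x : H, ∀ w ∈ fixed, φ x w ∈ fixed := by
    intro x w hw
    change φ h (φ x w) = φ x w
    rw [← MulAut.mul_apply, ← map_mul, mul_comm, map_mul, MulAut.mul_apply]
    exact congrArg (φ x) hw
  rcases hirr fixed hinv with hbot | htop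
  · exact fun v hv => Subgroup.mem_bot.1 (hbot ▸ hv)
  · refine absurd (hfaith ?_) hh
    rw [map_one]
    ext w
    exact (htop ▸ Subgroup.mem_top w : w ∈ fixed)

section Main

variable {H V : Type} [CommGroup H] [CommGroup V] {φ : H →* MulAut V} {k : Subfield ℂ}

lemma acd_semidirectProduct_eq [Finite H] [Nontrivial H] [Finite V]
    (hfree : ∀ h ≠ 1, MonoidHom.FixedPointFree (φ h)) (hk : dualOver V k = ⊤) :
    acd {f ∈ Irr (V ⋊[φ] H) | ∀ g, f g ∈ k} =
      (Nat.card (dualOver H k) + (inducedChar φ '' {1}ᶜ).ncard * Nat.card H) /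
        (Nat.card (dualOver H k) + (inducedChar φ '' {1}ᶜ).ncard) := by
  have hinflated : ∀ f ∈ inflatedChar φ '' dualOver H k, (f 1).re = 1 := by
    rintro _ ⟨ψ, -, rfl⟩
    rw [inflatedChar_one, Complex.one_re]
  have hinduced : ∀ f ∈ inducedChar φ '' {1}ᶜ, (f 1).re = Nat.card H := by
    rintro _ ⟨l, -, rfl⟩
    rw [inducedChar_one, Complex.natCast_re]
  have hdisj : Disjoint (inflatedChar φ '' dualOver H k) (inducedChar φ '' {1}ᶜ) := by
    refine Set.disjoint_left.2 fun f hf hf' => (Finite.one_lt_card (α := H)).ne ?_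
    exact_mod_cast (hinflated f hf).symm.trans (hinduced f hf')
  rw [Irr_semidirectProduct_values_mem_eq hfree hk,
    acd_union (Set.toFinite _) (Set.toFinite _) hdisj hinflated hinduced,
    Set.ncard_image_of_injective _ inflatedChar_injective, mul_one]
  rfl

lemma two_mul_add_le_of_not_exceptional {m n t : ℕ} (hn : 2 < n) (ht : 0 < t) (hmn : m ∣ n)
    (h3 : ¬(n = 3 ∧ m = n ∧ t * n + 1 < 10)) (h1 : ¬(t = 1 ∧ m = n)) :
    2 * (m + t) ≤ m + t * n := by
  rcases eq_or_ne m n with rfl | hne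
  · have ht : 2 ≤ t := by omega
    rcases (Nat.succ_le_of_lt hn).eq_or_lt with rfl | hm
    · omega
    · nlinarith
  · obtain ⟨c, rfl⟩ := hmn
    have hc : 2 ≤ c := by
      by_contra! hc
      interval_cases c <;> omega
    nlinarith

theorem abelian_semidirect_acd_cases_general [Finite H] [Nontrivial H] [Finite V] [Nontrivial V]
    (hfree : ∀ h ≠ 1, MonoidHom.FixedPointFree (φ h))
    (hk : ∀ ζ : ℂ, IsPrimitiveRoot ζ (Monoid.exponent V) → ζ ∈ k) :
    (Nat.card H = 2 →
        acd {f ∈ Irr (V ⋊[φ] H) | ∀ g, f g ∈ k} =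
          2 * ((Nat.card V : ℝ) + 1) / ((Nat.card V : ℝ) + 3)) ∧
    (Nat.card H = 3 ∧ linearKernel H k = {1} ∧ Nat.card V < 10 →
        acd {f ∈ Irr (V ⋊[φ] H) | ∀ g, f g ∈ k} =
          3 * ((Nat.card V : ℝ) + 2) / ((Nat.card V : ℝ) + 8)) ∧
    (Nat.card H = Nat.card V - 1 ∧ linearKernel H k = {1} →
        acd {f ∈ Irr (V ⋊[φ] H) | ∀ g, f g ∈ k} =
          2 * ((Nat.card V : ℝ) - 1) / (Nat.card V : ℝ)) ∧
    (¬ Nat.card H = 2 ∧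
        ¬ (Nat.card H = 3 ∧ linearKernel H k = {1} ∧ Nat.card V < 10) ∧
        ¬ (Nat.card H = Nat.card V - 1 ∧ linearKernel H k = {1}) →
        2 ≤ acd {f ∈ Irr (V ⋊[φ] H) | ∀ g, f g ∈ k}) := by
  have htwo : Nat.card H = 2 → Nat.card (dualOver H k) = Nat.card H := fun h =>
    card_dualOver_eq_iff.2 (linearKernel_eq_one_iff.2 (dualOver_eq_top_of_card_eq_two h))
  have hn : 1 < Nat.card H := Finite.one_lt_card
  have hV : 1 < Nat.card V := Finite.one_lt_card
  have hm : 0 < Nat.card (dualOver H k) := Nat.card_pos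
  have hdvd : Nat.card (dualOver H k) ∣ Nat.card H := card_dualOver_dvd
  rw [acd_semidirectProduct_eq hfree (dualOver_eq_top_of_primitiveRoot_mem hk),
    ← card_dualOver_eq_iff]
  rw [← ncard_inducedChar_image_mul_add_one hfree] at hV ⊢
  generalize Nat.card (dualOver H k) = m at *
  generalize Nat.card H = n at *
  generalize (inducedChar φ '' {1}ᶜ).ncard = t at *
  have ht : 0 < t := pos_of_mul_pos_left (Nat.lt_of_succ_lt_succ hV) n.zero_le
  have hone : n = t * n ↔ t = 1 := by rw [eq_comm, Nat.mul_eq_right (by omega)]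
  rw [Nat.add_sub_cancel]
  push_cast
  refine ⟨fun h2 => ?_, fun ⟨h3, hmn, _⟩ => ?_, fun ⟨h, hmn⟩ => ?_, fun ⟨h2, h3, h1⟩ => ?_⟩
  · rw [htwo h2, h2]
    field_simp
    ring
  · rw [hmn, h3]
    field_simp
    ring
  · rw [hmn, hone.1 h]
    field_simp
    ring
  · rw [le_div_iff₀ (by positivity)]
    exact_mod_cast two_mul_add_le_of_not_exceptional (by omega) ht hdvd h3 (by rwa [hone] at h1)

end Main

theorem abelian_semidirect_acd_cases
    (p a : ℕ) (hp : p.Prime) (ha : 0 < a)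
    (H V : Type) [CommGroup H] [Fintype H] [Nontrivial H]
    [CommGroup V] [Fintype V] [Nontrivial V]
    (helem : ∀ v : V, v ^ p = 1) (hcard : Nat.card V = p ^ a)
    (φ : H →* MulAut V) (hfaith : Function.Injective φ)
    (hirr : ∀ W : Subgroup V, (∀ h : H, ∀ w ∈ W, φ h w ∈ W) → W = ⊥ ∨ W = ⊤)
    (k : Subfield ℂ) (hk : ∀ ζ : ℂ, IsPrimitiveRoot ζ p → ζ ∈ k) :
    (Nat.card H = 2 →
        acd {f ∈ Irr (V ⋊[φ] H) | ∀ g, f g ∈ k} =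
          2 * ((p : ℝ) ^ a + 1) / ((p : ℝ) ^ a + 3)) ∧
    (Nat.card H = 3 ∧
        {h : H | ∀ χ : H → ℂ, χ ∈ Irr H → χ 1 = 1 → (∀ x, χ x ∈ k) → χ h = 1} = {1} ∧
        p ^ a < 10 →
        acd {f ∈ Irr (V ⋊[φ] H) | ∀ g, f g ∈ k} =
          3 * ((p : ℝ) ^ a + 2) / ((p : ℝ) ^ a + 8)) ∧
    (Nat.card H = p ^ a - 1 ∧
        {h : H | ∀ χ : H → ℂ, χ ∈ Irr H → χ 1 = 1 → (∀ x, χ x ∈ k) → χ h = 1} = {1} →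
        acd {f ∈ Irr (V ⋊[φ] H) | ∀ g, f g ∈ k} =
          2 * ((p : ℝ) ^ a - 1) / (p : ℝ) ^ a) ∧
    (¬ Nat.card H = 2 ∧
        ¬ (Nat.card H = 3 ∧
          {h : H | ∀ χ : H → ℂ, χ ∈ Irr H → χ 1 = 1 → (∀ x, χ x ∈ k) → χ h = 1} = {1} ∧
          p ^ a < 10) ∧
        ¬ (Nat.card H = p ^ a - 1 ∧
          {h : H | ∀ χ : H → ℂ, χ ∈ Irr H → χ 1 = 1 → (∀ x, χ x ∈ k) → χ h = 1} = {1}) →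
        2 ≤ acd {f ∈ Irr (V ⋊[φ] H) | ∀ g, f g ∈ k}) := by
  have hexp : Monoid.exponent V = p :=
    ((Nat.dvd_prime hp).1 (Monoid.exponent_dvd_of_forall_pow_eq_one helem)).resolve_left
      (Monoid.exp_eq_one_iff.not.2 (not_subsingleton V))
  simpa only [linearKernel, hcard, Nat.cast_pow] using abelian_semidirect_acd_cases_general
    (fun _ => fixedPointFree_of_irreducible hfaith hirr) (hexp ▸ hk)
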